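/- arXiv:2204.13831 — 2 statements merged into one kernel-verified Lean document; each statement's English description precedes it below -/
import Mathlib

section
/- Fix an integer q ≥ 0. Writing n = 2m, one has limsup_{m→∞} [ 2^{−(n−1)} · Σ_{i=1}^{m+q} i · γ_q^{(B)}(i, n−1) · log₂ i − (1/2) log₂ n ] ≤ β, where β = (2 − ln 4 − γ)/(ln 4) − 1/2 and γ is the Euler–Mascheroni constant (numerically β ≈ −0.474). -/
/-- The Hamming weight of a binary word `x ∈ {0,1}^N`: the number of ones. -/
def wt {N : ℕ} (x : Fin N → Bool) : ℕ :=
  (Finset.univ.filter (fun i => x i = true)).card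

/-- `Flip x j` complements the first `j` bits of `x`. -/
def Flip {N : ℕ} (x : Fin N → Bool) (j : ℕ) : Fin N → Bool :=
  fun i => if (i : ℕ) < j then !(x i) else x i

/-- `j ∈ T_B(x,q)`: `j ∈ {0,…,n−1}` and `wt(Flip(x,j)) ∈ {m+q−1, m+q}`. -/
def TBmem (m q : ℕ) (x : Fin (2*m-1) → Bool) (j : ℕ) : Prop :=
  j ≤ 2*m - 1 ∧ (wt (Flip x j) = m + q - 1 ∨ wt (Flip x j) = m + q)

/-- `Γ_q^{(B)}(c)`: the set of indices `j` such that the word `x = Flip(c,j)`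
satisfies `T_B(x,q) ≠ ∅` and `min T_B(x,q) = j`. -/
def GammaB (m q : ℕ) (c : Fin (2*m-1) → Bool) : Set ℕ :=
  {j | TBmem m q (Flip c j) j ∧ ∀ j', TBmem m q (Flip c j) j' → j ≤ j'}

/-- `γ_q^{(B)}(i, n−1)`: the number of words `c ∈ {0,1}^{n−1}` with
`wt(c) ∈ {m+q−1, m+q}` and `|Γ_q^{(B)}(c)| = i`. -/
noncomputable def gammaB (m q i : ℕ) : ℕ :=
  Nat.card {c : Fin (2*m-1) → Bool //
    (wt c = m + q - 1 ∨ wt c = m + q) ∧ Set.ncard (GammaB m q c) = i}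

/-!
A word `c` defines a `±1` walk, and `wt (Flip c j) - wt c` is its position after `j` steps. Since
the steps are `±1`, the condition `min T_B = j` says that `j` is a strict record of the walk of `c`
(if `wt c = m + q`) or of its negative (if `wt c = m + q - 1`). The number of strict records is one
more than the maximum, so by the reflection principle `γ_q(i, n-1)` is a sum of differences of
consecutive binomial coefficients, the ballot numbers `k / m · C(2m, m+k)` with `k = i ± q`.

The weights `4 k² / m · C(2m, m+k) / 4^m` form a probability distribution on `{1, …, m}`, and the
normalised sum is the mean of `log k` under it, up to an error `O(1 / k)` caused by the shifts `± q`
(the second difference of `x log x`). After rescaling `k` by `√m` the distribution converges to the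
Maxwell density `4 / √π · t² e^{-t²}`, with domination by a Gaussian. Hence the sum is
`½ log m + 4 / √π · ∫ t² e^{-t²} log t dt + o(1)`, and the integral is read off from `Γ'(3/2)`.
-/

open Filter MeasureTheory Real Topology

/-- The times `j ≤ N` at which the sequence `R` exceeds all its earlier values. -/
def strictRecords (R : ℕ → ℤ) (N : ℕ) : Finset ℕ :=
  {j ∈ Finset.range (N + 1) | ∀ i < j, R i < R j}

theorem mem_strictRecords {R : ℕ → ℤ} {N j : ℕ} :
    j ∈ strictRecords R N ↔ j ≤ N ∧ ∀ i < j, R i < R j := by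
  rw [strictRecords, Finset.mem_filter, Finset.mem_range_succ_iff]

theorem forall_lt_iff_partialSups_lt {R : ℕ → ℤ} {N : ℕ} {a : ℤ} :
    (∀ i < N + 1, R i < a) ↔ partialSups R N < a := by
  simp only [Nat.lt_succ_iff, ← Int.le_sub_one_iff, partialSups_le_iff]

theorem card_strictRecords {R : ℕ → ℤ} (hR : ∀ j, R (j + 1) ≤ R j + 1) (N : ℕ) :
    ((strictRecords R N).card : ℤ) = partialSups R N - R 0 + 1 := by
  induction N with
  | zero => simp [strictRecords, Finset.filter_singleton]
  | succ N ih =>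
    have hstep : R (N + 1) ≤ partialSups R N + 1 :=
      (hR N).trans (Int.add_le_add_right (le_partialSups R N) 1)
    rw [strictRecords, Finset.range_add_one, Finset.filter_insert, ← strictRecords,
      partialSups_add_one]
    simp only [forall_lt_iff_partialSups_lt]
    split_ifs with h
    · rw [Finset.card_insert_of_notMem (by simp [mem_strictRecords]), sup_of_le_right h.le]
      push_cast
      omega
    · rw [sup_of_le_left (not_lt.mp h), ih]

theorem mem_strictRecords_iff_forall_ne {R : ℕ → ℤ} (hR : ∀ j, R j ≤ R (j + 1) + 1) {N j : ℕ} :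
    j ∈ strictRecords R N ↔ j ≤ N ∧ ∀ i < j, R i ≠ R j ∧ R i ≠ R j + 1 := by
  rw [mem_strictRecords]
  refine and_congr_right fun _ => ⟨fun h i hi => ?_, fun h i hi => ?_⟩
  · have := h i hi
    omega
  · -- Going back from time `j`, the sequence cannot rise through the two avoided levels.
    have hle : R i ≤ R j := by
      refine Nat.decreasingInduction (motive := fun l _ => R l ≤ R j)
        (fun l hl ih => ?_) le_rfl hi.le
      have := hR l
      have := (h l hl).2
      omega
    exact lt_of_le_of_ne hle (h i hi).1

section Walk

variable {N : ℕ}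

/-- The `±1` walk `j ↦ ∑_{i < j} (1 - 2 cᵢ)` of a binary word, constant from time `N` on. -/
def walk (c : Fin N → Bool) (j : ℕ) : ℤ :=
  ∑ i : Fin N, if (i : ℕ) < j then 1 - 2 * ((c i).toNat : ℤ) else 0

/-- The maximum of the walk of a binary word of length `N` over the times `0, …, N`. -/
def walkMax (c : Fin N → Bool) : ℤ :=
  partialSups (walk c) N

theorem wt_eq_sum (c : Fin N → Bool) : wt c = ∑ i, (c i).toNat := by
  rw [wt, Finset.card_filter]
  exact Finset.sum_congr rfl fun i _ => by cases c i <;> rfl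

theorem wt_cons (b : Bool) (c : Fin N → Bool) :
    wt (Fin.cons b c : Fin (N + 1) → Bool) = b.toNat + wt c := by
  simp only [wt_eq_sum, Fin.sum_univ_succ, Fin.cons_zero, Fin.cons_succ]

theorem wt_compl_add_wt (c : Fin N → Bool) : wt cᶜ + wt c = N := by
  have h (i : Fin N) : (cᶜ i).toNat + (c i).toNat = 1 := by
    cases hc : c i <;> simp [hc]
  simp only [wt_eq_sum, ← Finset.sum_add_distrib, h]
  simp

@[simp]
theorem walk_zero (c : Fin N → Bool) : walk c 0 = 0 := by
  simp [walk]

theorem walk_length (c : Fin N → Bool) : walk c N = N - 2 * wt c := by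
  simp [walk, wt_eq_sum, Finset.mul_sum]

theorem walk_cons_succ (b : Bool) (c : Fin N → Bool) (j : ℕ) :
    walk (Fin.cons b c : Fin (N + 1) → Bool) (j + 1) = 1 - 2 * b.toNat + walk c j := by
  simp [walk, Fin.sum_univ_succ]

theorem abs_walk_succ_sub_le_one (c : Fin N → Bool) (j : ℕ) :
    |walk c (j + 1) - walk c j| ≤ 1 := by
  induction N generalizing j with
  | zero => simp [walk]
  | succ N ih =>
    rw [← Fin.cons_self_tail c, walk_cons_succ]
    cases j with
    | zero => cases c 0 <;> simp
    | succ j => simpa only [walk_cons_succ, add_sub_add_left_eq_sub] using ih (Fin.tail c) j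

theorem walk_succ_le (c : Fin N → Bool) (j : ℕ) : walk c (j + 1) ≤ walk c j + 1 := by
  have := abs_le.mp (abs_walk_succ_sub_le_one c j)
  omega

theorem walk_le_walk_succ_add_one (c : Fin N → Bool) (j : ℕ) :
    walk c j ≤ walk c (j + 1) + 1 := by
  have := abs_le.mp (abs_walk_succ_sub_le_one c j)
  omega

theorem wt_Flip (c : Fin N → Bool) (j : ℕ) : (wt (Flip c j) : ℤ) = wt c + walk c j := by
  rw [wt_eq_sum, wt_eq_sum, walk]
  push_cast
  rw [← Finset.sum_add_distrib]
  refine Finset.sum_congr rfl fun i _ => ?_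
  unfold Flip
  split_ifs <;> cases c i <;> rfl

theorem walk_Flip_of_le (c : Fin N → Bool) {i j : ℕ} (h : i ≤ j) :
    walk (Flip c j) i = -walk c i := by
  rw [walk, walk, ← Finset.sum_neg_distrib]
  refine Finset.sum_congr rfl fun l _ => ?_
  by_cases hl : (l : ℕ) < i
  · have hlj : (l : ℕ) < j := hl.trans_le h
    cases hc : c l <;> simp [Flip, hl, hlj, hc]
  · simp [hl]

theorem wt_Flip_Flip_of_le (c : Fin N → Bool) {i j : ℕ} (h : i ≤ j) :
    (wt (Flip (Flip c j) i) : ℤ) = wt c + walk c j - walk c i := by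
  rw [wt_Flip, wt_Flip, walk_Flip_of_le c h, sub_eq_add_neg]

theorem walk_compl (c : Fin N → Bool) (j : ℕ) : walk cᶜ j = -walk c j := by
  rw [walk, walk, ← Finset.sum_neg_distrib]
  refine Finset.sum_congr rfl fun i _ => ?_
  split_ifs <;> cases hc : c i <;> simp [hc]

theorem walkMax_cons (b : Bool) (c : Fin N → Bool) :
    walkMax (Fin.cons b c : Fin (N + 1) → Bool) = 0 ⊔ (1 - 2 * b.toNat + walkMax c) := by
  have hshift : (fun j => walk (Fin.cons b c : Fin (N + 1) → Bool) (j + 1)) =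
      fun j => 1 - 2 * b.toNat + walk c j :=
    funext (walk_cons_succ b c)
  rw [walkMax, walkMax, partialSups_add_one', Function.comp_def, hshift, partialSups_const_add,
    Nat.bot_eq_zero, walk_zero]

theorem walk_length_le_walkMax (c : Fin N → Bool) : walk c N ≤ walkMax c :=
  le_partialSups (walk c) N

theorem card_filter_cons (p : (Fin (N + 1) → Bool) → Prop) [DecidablePred p] :
    ({c | p c} : Finset _).card = ({c | p (Fin.cons true c)} : Finset (Fin N → Bool)).card +
      ({c | p (Fin.cons false c)} : Finset (Fin N → Bool)).card := by
  simp only [Finset.card_filter]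
  rw [← (Fin.consEquiv fun _ => Bool).sum_comp, Fintype.sum_prod_type, Fintype.sum_bool]
  rfl

theorem card_wt_eq (N w : ℕ) :
    ({c | wt c = w} : Finset (Fin N → Bool)).card = N.choose w := by
  calc
    _ = (Finset.powersetCard w (Finset.univ : Finset (Fin N))).card := by
      refine Finset.card_nbij' (fun c => Finset.univ.filter fun i => c i = true)
        (fun s i => decide (i ∈ s)) (fun c hc => ?_) (fun s hs => ?_) (fun c _ => ?_)
        (fun s _ => ?_)
      · exact Finset.mem_powersetCard_univ.mpr (Finset.mem_filter.mp hc).2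
      · exact Finset.mem_filter.mpr ⟨Finset.mem_univ _, by simpa [wt] using hs⟩
      · simp
      · simp
    _ = N.choose w := by rw [Finset.card_powersetCard, Finset.card_univ, Fintype.card_fin]

theorem walkMax_nonneg (c : Fin N → Bool) : 0 ≤ walkMax c :=
  walk_zero c ▸ le_partialSups_of_le (walk c) N.zero_le

-- Removing the first letter turns the reflection principle into Pascal's rule.
theorem card_wt_eq_and_le_walkMax {N w k : ℕ} (h : N ≤ 2 * w + k) :
    ({c | wt c = w ∧ (k : ℤ) ≤ walkMax c} : Finset (Fin N → Bool)).card =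
      N.choose (w + k) := by
  induction N generalizing w k with
  | zero =>
    cases k with
    | zero => simpa [walkMax_nonneg] using card_wt_eq 0 w
    | succ k =>
      have hmax (c : Fin 0 → Bool) : ¬((k + 1 : ℕ) : ℤ) ≤ walkMax c := by
        simp only [walkMax, partialSups_zero, walk_zero]
        omega
      simp only [hmax, and_false, Finset.filter_false, Finset.card_empty, ← add_assoc,
        Nat.choose_zero_succ]
  | succ N ih =>
    cases k with
    | zero => simpa [walkMax_nonneg] using card_wt_eq (N + 1) w
    | succ k =>
      have htrue (c : Fin N → Bool) :
          ((k + 1 : ℕ) : ℤ) ≤ walkMax (Fin.cons true c : Fin (N + 1) → Bool) ↔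
            ((k + 2 : ℕ) : ℤ) ≤ walkMax c := by
        rw [walkMax_cons, le_sup_iff, Bool.toNat_true]
        omega
      have hfalse (c : Fin N → Bool) :
          ((k + 1 : ℕ) : ℤ) ≤ walkMax (Fin.cons false c : Fin (N + 1) → Bool) ↔
            (k : ℤ) ≤ walkMax c := by
        rw [walkMax_cons, le_sup_iff, Bool.toNat_false]
        omega
      simp only [card_filter_cons, wt_cons, htrue, hfalse, Bool.toNat_true, Bool.toNat_false,
        zero_add]
      cases w with
      | zero =>
        rw [ih (by omega)]
        simp [Nat.choose_eq_zero_of_lt (show N < k + 1 by omega), Nat.choose_succ_succ]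
      | succ w =>
        simp only [add_comm 1, Nat.add_right_cancel_iff]
        rw [ih (by omega), ih (by omega), add_comm, ← add_assoc (w + 1) k 1,
          Nat.choose_succ_succ', show w + (k + 2) = w + 1 + k + 1 by omega]

theorem card_wt_eq_and_walkMax_eq (N w k : ℕ) :
    (({c | wt c = w ∧ walkMax c = k} : Finset (Fin N → Bool)).card : ℝ) =
      if N ≤ 2 * w + k then (N.choose (w + k) : ℝ) - N.choose (w + k + 1) else 0 := by
  split_ifs with h
  · have hdisj : Disjoint ({c | wt c = w ∧ walkMax c = k} : Finset (Fin N → Bool))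
        ({c | wt c = w ∧ ((k + 1 : ℕ) : ℤ) ≤ walkMax c} : Finset (Fin N → Bool)) :=
      Finset.disjoint_filter.mpr fun c _ hc hc' => by omega
    have hunion : ({c | wt c = w ∧ (k : ℤ) ≤ walkMax c} : Finset (Fin N → Bool)) =
        Finset.univ.filter (fun c => wt c = w ∧ walkMax c = k) ∪ Finset.univ.filter
          fun c => wt c = w ∧ ((k + 1 : ℕ) : ℤ) ≤ walkMax c := by
      rw [← Finset.filter_or]
      exact Finset.filter_congr fun c _ => by omega
    have hcard := Finset.card_union_of_disjoint hdisj
    rw [← hunion, card_wt_eq_and_le_walkMax h, card_wt_eq_and_le_walkMax (by omega)] at hcard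
    rw [hcard, ← add_assoc]
    push_cast
    ring
  · have hempty (c : Fin N → Bool) : ¬(wt c = w ∧ walkMax c = k) := fun hc => by
      have := walk_length_le_walkMax c
      rw [walk_length] at this
      omega
    simp [hempty]

end Walk

section GammaB

variable {m q : ℕ}

theorem mem_GammaB_iff {c : Fin (2 * m - 1) → Bool} (hc : wt c = m + q - 1 ∨ wt c = m + q)
    {j : ℕ} : j ∈ GammaB m q c ↔ j ≤ 2 * m - 1 ∧ ∀ i < j,
      (wt c + walk c j - walk c i : ℤ) ≠ (m + q - 1 : ℕ) ∧
        (wt c + walk c j - walk c i : ℤ) ≠ (m + q : ℕ) := by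
  have hj : wt (Flip (Flip c j) j) = wt c := by
    have := wt_Flip_Flip_of_le c le_rfl (j := j)
    omega
  simp only [GammaB, TBmem, Set.mem_ofPred_eq, hj, hc, and_true]
  refine and_congr_right fun hjm => forall_congr' fun i => ?_
  rw [← not_imp_not]
  refine ⟨fun h hi => ?_, fun h hi hT => ?_⟩
  · have := h (by omega)
    rw [← wt_Flip_Flip_of_le c hi.le]
    omega
  · have := h (by omega)
    rw [← wt_Flip_Flip_of_le c (by omega)] at this
    omega

theorem GammaB_eq_of_wt_eq {c : Fin (2 * m - 1) → Bool} (hc : wt c = m + q) :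
    GammaB m q c = strictRecords (walk c) (2 * m - 1) := by
  ext j
  rw [Finset.mem_coe, mem_strictRecords_iff_forall_ne (walk_le_walk_succ_add_one c),
    mem_GammaB_iff (.inr hc)]
  refine and_congr_right fun hjm => forall₂_congr fun i hi => ?_
  omega

theorem GammaB_eq_of_wt_eq_sub_one {c : Fin (2 * m - 1) → Bool} (hc : wt c = m + q - 1) :
    GammaB m q c = strictRecords (walk cᶜ) (2 * m - 1) := by
  ext j
  rw [Finset.mem_coe, mem_strictRecords_iff_forall_ne (walk_le_walk_succ_add_one cᶜ),
    mem_GammaB_iff (.inl hc)]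
  refine and_congr_right fun hjm => forall₂_congr fun i hi => ?_
  rw [walk_compl, walk_compl]
  omega

theorem ncard_strictRecords_walk {N : ℕ} (c : Fin N → Bool) :
    ((strictRecords (walk c) N : Set ℕ).ncard : ℤ) = walkMax c + 1 := by
  rw [Set.ncard_coe_finset, card_strictRecords (walk_succ_le c), walk_zero, sub_zero, walkMax]

theorem gammaB_succ (hm : 0 < m) (hq : q ≤ m) (k : ℕ) :
    gammaB m q (k + 1) =
      ({c | wt c = m + q ∧ walkMax c = k} : Finset (Fin (2 * m - 1) → Bool)).card +
        ({c | wt c = m - q ∧ walkMax c = k} : Finset (Fin (2 * m - 1) → Bool)).card := by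
  have hcompl : ({c | wt c = m - q ∧ walkMax c = k} : Finset (Fin (2 * m - 1) → Bool)).card =
      ({c | wt c = m + q - 1 ∧ walkMax cᶜ = k} : Finset (Fin (2 * m - 1) → Bool)).card := by
    refine Finset.card_equiv (compl_involutive.toPerm _) fun c => ?_
    have := wt_compl_add_wt c
    simp only [Finset.mem_filter, Finset.mem_univ, true_and, Function.Involutive.coe_toPerm,
      compl_compl]
    omega
  rw [hcompl, ← Finset.card_union_of_disjoint, ← Finset.filter_or, gammaB,
    Nat.card_eq_fintype_card, Fintype.card_subtype]
  · refine congrArg Finset.card (Finset.filter_congr fun c _ => ?_)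
    have hhigh (hc : wt c = m + q) := GammaB_eq_of_wt_eq hc ▸ ncard_strictRecords_walk c
    have hlow (hc : wt c = m + q - 1) := GammaB_eq_of_wt_eq_sub_one hc ▸ ncard_strictRecords_walk cᶜ
    omega
  · exact Finset.disjoint_filter.mpr fun c _ hc hc' => by omega

/-- The ballot number `k / m * C(2m, m+k)`, a difference of two binomial coefficients
(`ballot_eq_choose_sub_choose`). -/
noncomputable def ballot (m k : ℕ) : ℝ :=
  k / m * (2 * m).choose (m + k)

theorem ballot_eq_zero {k : ℕ} (h : m < k) : ballot m k = 0 := by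
  rw [ballot, Nat.choose_eq_zero_of_lt (by omega), Nat.cast_zero, mul_zero]

theorem ballot_eq_choose_sub_choose (hm : 0 < m) (k : ℕ) :
    ballot m k = ((2 * m - 1).choose (m + k - 1) : ℝ) - (2 * m - 1).choose (m + k) := by
  obtain ⟨n, rfl⟩ := Nat.exists_eq_succ_of_ne_zero hm.ne'
  have hpascal : (2 * (n + 1)).choose (n + 1 + k) =
      (2 * n + 1).choose (n + k) + (2 * n + 1).choose (n + k + 1) := by
    rw [← Nat.choose_succ_succ', show n + 1 + k = n + k + 1 by omega]
    rfl
  have hratio : ((2 * n + 1).choose (n + k + 1) : ℝ) * (n + k + 1) =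
      (2 * n + 1).choose (n + k) * (n + 1 - k) := by
    have h := congrArg (Nat.cast : ℕ → ℝ) (Nat.choose_succ_right_eq (2 * n + 1) (n + k))
    rcases le_or_gt (n + k) (2 * n + 1) with hle | hlt
    · push_cast [Nat.cast_sub hle] at h
      linarith
    · simp [Nat.choose_eq_zero_of_lt, hlt, hlt.trans (Nat.lt_succ_self _)]
  rw [ballot, Nat.succ_eq_add_one, hpascal, show 2 * (n + 1) - 1 = 2 * n + 1 by omega,
    show n + 1 + k - 1 = n + k by omega, show n + 1 + k = n + k + 1 by omega]
  push_cast
  field_simp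
  linarith

theorem gammaB_eq (hm : 0 < m) (hq : q ≤ m) {i : ℕ} (hi : 0 < i) :
    (gammaB m q i : ℝ) = ballot m (i + q) + if 2 * q ≤ i then ballot m (i - q) else 0 := by
  obtain ⟨k, rfl⟩ := Nat.exists_eq_succ_of_ne_zero hi.ne'
  have hballot {w l : ℕ} (hl : m + l = w + k + 1) :
      ((2 * m - 1).choose (w + k) : ℝ) - (2 * m - 1).choose (w + k + 1) = ballot m l := by
    rw [ballot_eq_choose_sub_choose hm, hl, Nat.add_sub_cancel]
  rw [Nat.succ_eq_add_one, gammaB_succ hm hq, Nat.cast_add, card_wt_eq_and_walkMax_eq,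
    card_wt_eq_and_walkMax_eq, if_pos (by omega), hballot (l := k + 1 + q) (by omega)]
  congr 1
  exact ite_congr (propext (by omega)) (fun h => hballot (by omega)) fun _ => rfl

theorem sum_mul_gammaB (hm : 0 < m) (hq : q ≤ m) {f : ℕ → ℝ} (hf : f 0 = 0) :
    ∑ i ∈ Finset.Icc 1 (m + q), f i * gammaB m q i =
      ∑ k ∈ Finset.Icc 1 m, ballot m k * (f (k - q) + if q ≤ k then f (k + q) else 0) := by
  have hsplit (i) (hi : i ∈ Finset.Icc 1 (m + q)) : f i * gammaB m q i =
      ballot m (i + q) * f i + if 2 * q ≤ i then ballot m (i - q) * f i else 0 := by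
    rw [gammaB_eq hm hq (Finset.mem_Icc.mp hi).1]
    split_ifs <;> ring
  have hballot {k : ℕ} {x : ℝ} (h : ballot m k * x ≠ 0) : k ≤ m :=
    not_lt.mp fun hk => h (by rw [ballot_eq_zero hk, zero_mul])
  rw [Finset.sum_congr rfl hsplit, Finset.sum_add_distrib]
  simp only [mul_add, Finset.sum_add_distrib, mul_ite, mul_zero, ← Finset.sum_filter]
  congr 1
  · refine Finset.sum_bij_ne_zero (fun i _ _ => i + q) ?_ ?_ ?_ ?_
    · intro i hi h
      have := hballot h
      simp only [Finset.mem_Icc] at hi ⊢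
      omega
    · intro i _ _ j _ _ h
      omega
    · intro k hk h
      have hqk : q < k := not_le.mp fun hkq => h (by rw [Nat.sub_eq_zero_of_le hkq, hf, mul_zero])
      simp only [Finset.mem_Icc] at hk
      refine ⟨k - q, by simp only [Finset.mem_Icc]; omega, ?_, by omega⟩
      rwa [Nat.sub_add_cancel hqk.le]
    · intro i _ _
      rw [Nat.add_sub_cancel]
  · refine Finset.sum_nbij' (· - q) (· + q) ?_ ?_ ?_ ?_ ?_ <;> intro i hi <;>
      simp only [Finset.mem_filter, Finset.mem_Icc] at hi ⊢
    · omega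
    · omega
    · omega
    · omega
    · rw [Nat.sub_add_cancel (by omega)]

end GammaB

theorem four_pow_eq_two_mul_two_pow {m : ℕ} (hm : 0 < m) : (4 : ℝ) ^ m = 2 * 2 ^ (2 * m - 1) := by
  rw [← pow_succ', Nat.sub_add_cancel (by omega), pow_mul]
  norm_num

/-- The weights `4 k² / m · C(2m, m+k) / 4^m`, which form a probability distribution on
`{1, …, m}` converging, after rescaling by `√m`, to the Maxwell density `4 / √π · t² e^{-t²}`. -/
noncomputable def maxwellWeight (m k : ℕ) : ℝ :=
  4 * k * ballot m k / 4 ^ m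

theorem maxwellWeight_nonneg (m k : ℕ) : 0 ≤ maxwellWeight m k := by
  unfold maxwellWeight ballot
  positivity

theorem maxwellWeight_eq_zero {m k : ℕ} (h : m < k) : maxwellWeight m k = 0 := by
  rw [maxwellWeight, ballot_eq_zero h, mul_zero, zero_div]

theorem sum_Icc_mul_sub_succ (a : ℕ → ℝ) (n : ℕ) :
    ∑ k ∈ Finset.Icc 1 n, (k : ℝ) * (a (k - 1) - a k) = ∑ k ∈ Finset.range n, a k - n * a n := by
  induction n with
  | zero => simp
  | succ n ih =>
    rw [Finset.sum_Icc_succ_top (by omega), ih, Finset.sum_range_succ, Nat.add_sub_cancel]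
    push_cast
    ring

theorem sum_range_choose_two_mul_sub_one {m : ℕ} (hm : 0 < m) :
    ∑ k ∈ Finset.range m, (2 * m - 1).choose (m + k) = 4 ^ (m - 1) := by
  obtain ⟨n, rfl⟩ := Nat.exists_eq_succ_of_ne_zero hm.ne'
  rw [Nat.succ_eq_add_one, Nat.add_sub_cancel, ← Nat.sum_range_choose_halfway n,
    ← Finset.sum_range_reflect]
  refine Finset.sum_congr rfl fun k hk => Nat.choose_symm_of_eq_add ?_
  rw [Finset.mem_range] at hk
  omega

theorem sum_maxwellWeight {m : ℕ} (hm : 0 < m) :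
    ∑ k ∈ Finset.Icc 1 m, maxwellWeight m k = 1 := by
  have hballot (k) (hk : k ∈ Finset.Icc 1 m) : maxwellWeight m k = 4 / 4 ^ m *
      (k * (((2 * m - 1).choose (m + (k - 1)) : ℝ) - (2 * m - 1).choose (m + k))) := by
    rw [maxwellWeight, ballot_eq_choose_sub_choose hm, Nat.add_sub_assoc (Finset.mem_Icc.mp hk).1]
    ring
  rw [Finset.sum_congr rfl hballot, ← Finset.mul_sum,
    sum_Icc_mul_sub_succ fun k => ((2 * m - 1).choose (m + k) : ℝ),
    Nat.choose_eq_zero_of_lt (show 2 * m - 1 < m + m by omega), ← Nat.cast_sum,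
    sum_range_choose_two_mul_sub_one hm, ← Nat.sub_add_cancel hm, pow_succ]
  push_cast
  field_simp
  simp

theorem sqrt_mul_maxwellWeight {m : ℕ} (hm : 0 < m) (k : ℕ) :
    √m * maxwellWeight m k = 4 * (√m * (m.centralBinom / 4 ^ m)) * (k / √m) ^ 2 *
      ((2 * m).choose (m + k) / m.centralBinom) := by
  have : (0 : ℝ) < m.centralBinom := by exact_mod_cast m.centralBinom_pos
  rw [maxwellWeight, ballot, div_pow, sq_sqrt m.cast_nonneg]
  field_simp

theorem choose_add_succ_mul {m k : ℕ} (hk : k ≤ m) :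
    ((2 * m).choose (m + (k + 1)) : ℝ) * (m + k + 1) = (2 * m).choose (m + k) * (m - k) := by
  have h := congrArg (Nat.cast : ℕ → ℝ) (Nat.choose_succ_right_eq (2 * m) (m + k))
  rw [show 2 * m - (m + k) = m - k by omega] at h
  push_cast [Nat.cast_sub hk] at h
  exact h

theorem choose_le_centralBinom_mul_exp (m k : ℕ) :
    ((2 * m).choose (m + k) : ℝ) ≤ m.centralBinom * exp (-(k ^ 2 / (m + k))) := by
  induction k with
  | zero => simp [Nat.centralBinom]
  | succ k ih =>
    rcases le_or_gt m k with hk | hk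
    · rw [Nat.choose_eq_zero_of_lt (by omega), Nat.cast_zero]
      positivity
    have hkm : (k : ℝ) < m := by exact_mod_cast hk
    have hratio : ((m : ℝ) - k) / (m + k + 1) ≤ exp (-((2 * k + 1) / (m + k + 1))) := by
      refine le_of_eq_of_le ?_ (add_one_le_exp _)
      field_simp
      ring
    calc ((2 * m).choose (m + (k + 1)) : ℝ)
      _ = (2 * m).choose (m + k) * ((m - k) / (m + k + 1)) := by
        rw [← mul_div_assoc, ← choose_add_succ_mul hk.le, mul_div_cancel_right₀ _ (by positivity)]
      _ ≤ (m.centralBinom * exp (-(k ^ 2 / (m + k + 1)))) *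
          exp (-((2 * k + 1) / (m + k + 1))) := by
        have hexp : (k : ℝ) ^ 2 / (m + k + 1) ≤ k ^ 2 / (m + k) :=
          div_le_div_of_nonneg_left (by positivity) (by linarith [k.cast_nonneg (α := ℝ)])
            (by linarith)
        refine mul_le_mul (ih.trans ?_) hratio (div_nonneg (by linarith) (by positivity))
          (by positivity)
        gcongr
      _ = m.centralBinom * exp (-((k + 1 : ℕ) ^ 2 / (m + (k + 1 : ℕ)))) := by
        rw [mul_assoc, ← exp_add]
        push_cast
        ring_nf

theorem centralBinom_mul_exp_le_choose {m k : ℕ} (hk : k ≤ m) :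
    m.centralBinom * exp (-(k ^ 2 / (m - k + 1))) ≤ ((2 * m).choose (m + k) : ℝ) := by
  induction k with
  | zero => simp [Nat.centralBinom]
  | succ k ih =>
    have hkm : (k : ℝ) + 1 ≤ m := by exact_mod_cast hk
    have hpos : 0 < (m : ℝ) - k := by linarith
    have hratio : exp (-((2 * k + 1) / (m - k))) ≤ ((m : ℝ) - k) / (m + k + 1) := by
      rw [exp_neg, ← inv_div (m + k + 1 : ℝ)]
      refine inv_anti₀ (div_pos (by positivity) hpos) (le_of_eq_of_le ?_ (add_one_le_exp _))
      field_simp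
      ring
    calc m.centralBinom * exp (-((k + 1 : ℕ) ^ 2 / (m - (k + 1 : ℕ) + 1)))
      _ = (m.centralBinom * exp (-(k ^ 2 / (m - k)))) * exp (-((2 * k + 1) / (m - k))) := by
        rw [mul_assoc, ← exp_add]
        push_cast
        ring_nf
      _ ≤ (2 * m).choose (m + k) * ((m - k) / (m + k + 1)) := by
        refine mul_le_mul (le_trans ?_ (ih (by omega))) hratio (by positivity) (by positivity)
        gcongr
        linarith
      _ = (2 * m).choose (m + (k + 1)) := by
        rw [← mul_div_assoc, ← choose_add_succ_mul (by omega),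
          mul_div_cancel_right₀ _ (by positivity)]

theorem tendsto_choose_div_centralBinom {k : ℕ → ℕ} {t : ℝ}
    (hk : Tendsto (fun m : ℕ => (k m : ℝ) / √m) atTop (𝓝 t)) :
    Tendsto (fun m : ℕ => ((2 * m).choose (m + k m) : ℝ) / m.centralBinom) atTop
      (𝓝 (exp (-t ^ 2))) := by
  have hsqrt : Tendsto (fun m : ℕ => √(m : ℝ)) atTop atTop :=
    tendsto_sqrt_atTop.comp tendsto_natCast_atTop_atTop
  have hratio : Tendsto (fun m : ℕ => (k m : ℝ) / m) atTop (𝓝 0) :=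
    (hk.div_atTop hsqrt).congr fun m => by rw [div_div, mul_self_sqrt m.cast_nonneg]
  have hsq {x : ℕ → ℝ} (hx : Tendsto x atTop (𝓝 1)) :
      Tendsto (fun m : ℕ => exp (-((k m / √m) ^ 2 / x m))) atTop (𝓝 (exp (-t ^ 2))) := by
    simpa using ((hk.pow 2).div hx one_ne_zero).neg.rexp
  have hlow : Tendsto (fun m : ℕ => 1 - (k m : ℝ) / m + 1 / m) atTop (𝓝 1) := by
    simpa using (hratio.const_sub 1).add tendsto_one_div_atTop_nhds_zero_nat
  have hup : Tendsto (fun m : ℕ => 1 + (k m : ℝ) / m) atTop (𝓝 1) := by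
    simpa using hratio.const_add 1
  have hdiv {m : ℕ} (hm : 0 < m) {x y : ℝ} (hxy : x = y / m) :
      ((k m : ℝ) / √m) ^ 2 / x = k m ^ 2 / y := by
    rw [hxy, div_pow, sq_sqrt m.cast_nonneg, div_div_div_cancel_right₀ (by positivity)]
  refine tendsto_of_tendsto_of_tendsto_of_le_of_le' (hsq hlow) (hsq hup) ?_ ?_
  · filter_upwards [eventually_gt_atTop 0, hratio.eventually (gt_mem_nhds zero_lt_one)]
      with m hm hkm
    rw [div_lt_one (by positivity), Nat.cast_lt] at hkm
    rw [le_div_iff₀' (by exact_mod_cast m.centralBinom_pos),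
      hdiv hm (y := m - k m + 1) (by field_simp)]
    exact centralBinom_mul_exp_le_choose hkm.le
  · filter_upwards [eventually_gt_atTop 0] with m hm
    rw [div_le_iff₀' (by exact_mod_cast m.centralBinom_pos),
      hdiv hm (y := m + k m) (by field_simp)]
    exact choose_le_centralBinom_mul_exp m (k m)

theorem wallis_W_eq_centralBinom (m : ℕ) :
    Wallis.W m = ((m.centralBinom / 4 ^ m : ℝ) ^ 2 * (2 * m + 1))⁻¹ := by
  have hpow : (2 : ℝ) ^ (4 * m) = (4 ^ m) ^ 2 := by
    rw [← pow_mul, mul_comm m, pow_mul, pow_mul]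
    norm_num
  rw [Wallis.W_eq_factorial_ratio, hpow, Nat.centralBinom, Nat.cast_choose ℝ (by omega),
    show 2 * m - m = m by omega]
  field_simp

theorem tendsto_sqrt_mul_centralBinom_div :
    Tendsto (fun m : ℕ => √m * (m.centralBinom / 4 ^ m)) atTop (𝓝 (1 / √π)) := by
  have hwallis : Tendsto (fun m : ℕ => (m.centralBinom / 4 ^ m : ℝ) ^ 2 * (2 * m + 1)) atTop
      (𝓝 (π / 2)⁻¹) := by
    simpa [wallis_W_eq_centralBinom] using Wallis.tendsto_W_nhds_pi_div_two.inv₀ (by positivity)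
  have hratio : Tendsto (fun m : ℕ => (m : ℝ) / (2 * m + 1)) atTop (𝓝 (1 / 2)) := by
    have h := (tendsto_natCast_div_add_atTop (1 / 2 : ℝ)).const_mul (1 / 2)
    rw [mul_one] at h
    refine h.congr fun m => ?_
    field_simp
  have hlim : √((π / 2)⁻¹ * (1 / 2)) = 1 / √π := by
    rw [show (π / 2)⁻¹ * (1 / 2) = π⁻¹ by field_simp, sqrt_inv, one_div]
  rw [← hlim]
  refine (hwallis.mul hratio).sqrt.congr fun m => ?_
  rw [show (m.centralBinom / 4 ^ m : ℝ) ^ 2 * (2 * m + 1) * (m / (2 * m + 1)) =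
    m * (m.centralBinom / 4 ^ m) ^ 2 by field_simp, sqrt_mul m.cast_nonneg,
    sqrt_sq (by positivity)]

theorem intervalIntegral_natCeil {E : Type*} [NormedAddCommGroup E] [NormedSpace ℝ E]
    [CompleteSpace E] (g : ℕ → E) (M : ℕ) :
    ∫ t in (0 : ℝ)..M, g ⌈t⌉₊ = ∑ k ∈ Finset.Icc 1 M, g k := by
  have hceil (k : ℕ) : Set.EqOn (fun _ : ℝ => g (k + 1)) (fun t : ℝ => g ⌈t⌉₊)
      (Set.uIoc k (k + 1 : ℕ)) := fun t ht => by
    rw [Set.uIoc_of_le (by simp)] at ht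
    exact congrArg g ((Nat.ceil_eq_iff k.succ_ne_zero).mpr (by simpa using ht)).symm
  have hsum := intervalIntegral.sum_integral_adjacent_intervals (a := fun k : ℕ => (k : ℝ))
    (n := M) (f := fun t : ℝ => g ⌈t⌉₊) (μ := volume)
    fun k _ => (intervalIntegrable_const (c := g (k + 1))).congr (hceil k)
  have hunit (k : ℕ) : ∫ t in (k : ℝ)..(k + 1 : ℕ), g ⌈t⌉₊ = g (k + 1) := by
    rw [← intervalIntegral.integral_congr_ae (ae_of_all _ (hceil k))]
    simp
  simp only [hunit] at hsum
  rw [← Nat.cast_zero, ← hsum, Finset.range_eq_Ico, Finset.sum_Ico_add' g 0 M 1]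
  rfl

theorem integral_Ioi_natCeil_mul {E : Type*} [NormedAddCommGroup E] [NormedSpace ℝ E]
    [CompleteSpace E] {g : ℕ → E} {M : ℕ} (hg : ∀ k, M < k → g k = 0) {r : ℝ} (hr : 0 < r) :
    ∫ t in Set.Ioi (0 : ℝ), g ⌈r * t⌉₊ = r⁻¹ • ∑ k ∈ Finset.Icc 1 M, g k := by
  have hsupp : ∫ t in Set.Ioi (0 : ℝ), g ⌈t⌉₊ = ∫ t in Set.Ioc (0 : ℝ) M, g ⌈t⌉₊ :=
    setIntegral_eq_of_subset_of_forall_sdiff_eq_zero measurableSet_Ioi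
      Set.Ioc_subset_Ioi_self fun t ht =>
        hg _ (Nat.lt_ceil.mpr (not_le.mp fun htM => ht.2 ⟨ht.1, htM⟩))
  rw [integral_comp_mul_left_Ioi (fun t => g ⌈t⌉₊) 0 hr, mul_zero, hsupp,
    ← intervalIntegral.integral_of_le M.cast_nonneg, intervalIntegral_natCeil]

theorem integrable_add_pow_mul_exp_neg_mul_sq {b : ℝ} (hb : 0 < b) (a : ℝ) (d : ℕ) :
    Integrable fun t : ℝ => (t + a) ^ d * exp (-b * t ^ 2) := by
  simp only [add_pow, Finset.sum_mul]
  refine integrable_finsetSum _ fun i _ => ?_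
  have h := (integrable_rpow_mul_exp_neg_mul_sq hb
    (neg_one_lt_zero.trans_le i.cast_nonneg)).const_mul (a ^ (d - i) * d.choose i)
  refine h.congr (ae_of_all _ fun t => ?_)
  simp only [rpow_natCast]
  ring

theorem choose_div_centralBinom_le_exp {m : ℕ} (hm : 0 < m) (k : ℕ) :
    ((2 * m).choose (m + k) / m.centralBinom : ℝ) ≤ exp (-(1 / 2) * (k / √m) ^ 2) := by
  rcases lt_or_ge m k with hk | hk
  · rw [Nat.choose_eq_zero_of_lt (by omega), Nat.cast_zero, zero_div]
    positivity
  · rw [div_le_iff₀' (by exact_mod_cast m.centralBinom_pos), div_pow, sq_sqrt m.cast_nonneg]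
    refine (choose_le_centralBinom_mul_exp m k).trans ?_
    have hsq : (k : ℝ) ^ 2 / (2 * m) ≤ k ^ 2 / (m + k) := by
      have : (k : ℝ) ≤ m := by exact_mod_cast hk
      gcongr
      linarith
    gcongr
    calc -((k : ℝ) ^ 2 / (m + k)) ≤ -(k ^ 2 / (2 * m)) := neg_le_neg hsq
      _ = -(1 / 2) * (k ^ 2 / m) := by ring

theorem natCeil_sqrt_mul_div_mem_Icc {m : ℕ} (hm : 0 < m) {t : ℝ} (ht : 0 ≤ t) :
    (⌈√m * t⌉₊ / √m : ℝ) ∈ Set.Icc t (t + 1) := by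
  have hm' : 1 ≤ √(m : ℝ) := one_le_sqrt.mpr (by exact_mod_cast hm)
  have hceil := Nat.ceil_lt_add_one (show 0 ≤ √m * t by positivity)
  rw [Set.mem_Icc, le_div_iff₀' (by linarith), div_le_iff₀' (by linarith)]
  exact ⟨Nat.le_ceil _, by linarith⟩

theorem tendsto_natCeil_sqrt_mul_div {t : ℝ} (ht : 0 ≤ t) :
    Tendsto (fun m : ℕ => (⌈√m * t⌉₊ / √m : ℝ)) atTop (𝓝 t) := by
  have hsqrt : Tendsto (fun m : ℕ => √(m : ℝ)) atTop atTop :=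
    tendsto_sqrt_atTop.comp tendsto_natCast_atTop_atTop
  simpa only [Function.comp_def, mul_comm t] using (tendsto_nat_ceil_mul_div_atTop ht).comp hsqrt

theorem sqrt_mul_maxwellWeight_natCeil_mul_le {m : ℕ} (hm : 0 < m) {C : ℝ}
    (hC : √m * (m.centralBinom / 4 ^ m) ≤ C) {g : ℝ → ℝ} {A : ℝ} {d : ℕ}
    (hg : ∀ x, 0 < x → x ^ 2 * |g x| ≤ A * (x + 1) ^ d) {t : ℝ} (ht : 0 < t) :
    |√m * (maxwellWeight m ⌈√m * t⌉₊ * g (⌈√m * t⌉₊ / √m))| ≤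
      4 * C * A * ((t + 2) ^ d * exp (-(1 / 2) * t ^ 2)) := by
  have hratio := choose_div_centralBinom_le_exp hm ⌈√m * t⌉₊
  obtain ⟨htx, hxt⟩ := natCeil_sqrt_mul_div_mem_Icc hm ht.le
  rw [← mul_assoc, sqrt_mul_maxwellWeight hm]
  set x : ℝ := ⌈√m * t⌉₊ / √m
  have hA : 0 ≤ A :=
    nonneg_of_mul_nonneg_left ((by positivity : (0 : ℝ) ≤ 1 ^ 2 * |g 1|).trans (hg 1 one_pos))
      (by positivity)
  have hC0 : 0 ≤ C := hC.trans' (by positivity)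
  have hgx : x ^ 2 * |g x| ≤ A * (t + 2) ^ d := by
    refine (hg x (ht.trans_le htx)).trans ?_
    have : 0 ≤ x + 1 := by linarith
    gcongr A * ?_ ^ d
    linarith
  have hexp : exp (-(1 / 2) * x ^ 2) ≤ exp (-(1 / 2) * t ^ 2) := by
    refine exp_le_exp.mpr (mul_le_mul_of_nonpos_left ?_ (by norm_num))
    gcongr
  rw [abs_mul, abs_of_nonneg (by positivity)]
  calc 4 * (√m * (m.centralBinom / 4 ^ m)) * x ^ 2 *
        ((2 * m).choose (m + ⌈√m * t⌉₊) / m.centralBinom) * |g x|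
      = 4 * (√m * (m.centralBinom / 4 ^ m)) * (x ^ 2 * |g x|) *
        ((2 * m).choose (m + ⌈√m * t⌉₊) / m.centralBinom) := by ring
    _ ≤ 4 * C * (A * (t + 2) ^ d) * exp (-(1 / 2) * t ^ 2) := by
      gcongr
      exact hratio.trans hexp
    _ = _ := by ring

theorem tendsto_sqrt_mul_maxwellWeight_natCeil {t : ℝ} (ht : 0 ≤ t) :
    Tendsto (fun m : ℕ => √m * maxwellWeight m ⌈√m * t⌉₊) atTop
      (𝓝 (4 / √π * (t ^ 2 * exp (-t ^ 2)))) := by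
  have hx := tendsto_natCeil_sqrt_mul_div ht
  have h := ((tendsto_sqrt_mul_centralBinom_div.const_mul 4).mul (hx.pow 2)).mul
    (tendsto_choose_div_centralBinom hx)
  rw [mul_one_div, mul_assoc] at h
  refine h.congr' ?_
  filter_upwards [eventually_gt_atTop 0] with m hm
  rw [sqrt_mul_maxwellWeight hm]

theorem tendsto_sum_maxwellWeight_mul {g : ℝ → ℝ} (hcont : ContinuousOn g (Set.Ioi 0)) {A : ℝ}
    {d : ℕ} (hg : ∀ x, 0 < x → x ^ 2 * |g x| ≤ A * (x + 1) ^ d) :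
    Tendsto (fun m : ℕ => ∑ k ∈ Finset.Icc 1 m, maxwellWeight m k * g (k / √m)) atTop
      (𝓝 (4 / √π * ∫ t in Set.Ioi 0, t ^ 2 * exp (-t ^ 2) * g t)) := by
  obtain ⟨C, hC⟩ := tendsto_sqrt_mul_centralBinom_div.bddAbove_range
  let F (m k : ℕ) : ℝ := √m * (maxwellWeight m k * g (k / √m))
  have hmeas (m : ℕ) : AEStronglyMeasurable (fun t => F m ⌈√m * t⌉₊)
      (volume.restrict (Set.Ioi 0)) :=
    ((measurable_from_top (f := F m)).comp
      (Nat.measurable_ceil.comp (measurable_const_mul _))).aestronglyMeasurable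
  have hbound : ∀ᶠ m : ℕ in atTop, ∀ᵐ t ∂volume.restrict (Set.Ioi 0),
      ‖F m ⌈√m * t⌉₊‖ ≤ 4 * C * A * ((t + 2) ^ d * exp (-(1 / 2) * t ^ 2)) := by
    filter_upwards [eventually_gt_atTop 0] with m hm
    exact ae_restrict_of_forall_mem measurableSet_Ioi fun t ht =>
      sqrt_mul_maxwellWeight_natCeil_mul_le hm (hC ⟨m, rfl⟩) hg ht
  have hlim : ∀ᵐ t ∂volume.restrict (Set.Ioi 0), Tendsto (fun m : ℕ => F m ⌈√m * t⌉₊) atTop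
      (𝓝 (4 / √π * (t ^ 2 * exp (-t ^ 2) * g t))) := by
    refine ae_restrict_of_forall_mem measurableSet_Ioi fun t (ht : 0 < t) => ?_
    have hgt := (hcont.continuousAt (Ioi_mem_nhds ht)).tendsto.comp
      (tendsto_natCeil_sqrt_mul_div ht.le)
    simpa only [F, mul_assoc, Function.comp_apply] using
      (tendsto_sqrt_mul_maxwellWeight_natCeil ht.le).mul hgt
  have hdct := tendsto_integral_filter_of_dominated_convergence _ (.of_forall hmeas) hbound
    (((integrable_add_pow_mul_exp_neg_mul_sq one_half_pos 2 d).const_mul _).restrict) hlim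
  rw [integral_const_mul] at hdct
  refine hdct.congr' ?_
  filter_upwards [eventually_gt_atTop 0] with m hm
  have hm' : 0 < √(m : ℝ) := sqrt_pos.mpr (by exact_mod_cast hm)
  rw [integral_Ioi_natCeil_mul (M := m) (fun k hk => by simp [F, maxwellWeight_eq_zero hk]) hm',
    ← Finset.mul_sum, smul_eq_mul, inv_mul_cancel_left₀ hm'.ne']

theorem integral_rpow_mul_log_mul_exp_neg {s : ℝ} (hs : 0 < s) :
    ∫ u in Set.Ioi (0 : ℝ), u ^ (s - 1) * (log u * exp (-u)) = deriv Gamma s := by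
  have hcomplex : HasDerivAt Complex.Gamma
      ((∫ u in Set.Ioi (0 : ℝ), u ^ (s - 1) * (log u * exp (-u)) : ℝ) : ℂ) s := by
    have h := Complex.hasDerivAt_GammaIntegral (s := s) (by simpa using hs)
    have hGamma : Complex.Gamma =ᶠ[𝓝 (s : ℂ)] Complex.GammaIntegral := by
      filter_upwards [Complex.continuous_re.isOpen_preimage _ isOpen_Ioi |>.mem_nhds
        (show (s : ℂ).re ∈ Set.Ioi 0 by simpa using hs)] with z hz
      exact Complex.Gamma_eq_integral hz
    rw [← integral_complex_ofReal]
    refine (h.congr_of_eventuallyEq hGamma).congr_deriv ?_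
    refine setIntegral_congr_fun measurableSet_Ioi fun u (hu : 0 < u) => ?_
    push_cast [Complex.ofReal_cpow hu.le, Complex.ofReal_log hu.le]
    rfl
  exact hcomplex.real_of_complex.deriv.symm

theorem deriv_Gamma_three_halves :
    deriv Gamma (3 / 2) = √π / 2 * (2 - eulerMascheroniConstant - 2 * log 2) := by
  have hGamma : ∀ᶠ s : ℝ in 𝓝 (1 / 2), Gamma (s + 1) = s * Gamma s := by
    filter_upwards [eventually_ne_nhds one_half_pos.ne'] with s hs
    exact Gamma_add_one hs
  have hderiv : HasDerivAt (fun s => Gamma (s + 1)) (1 * Gamma (1 / 2) +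
      1 / 2 * (-√π * (eulerMascheroniConstant + 2 * log 2))) (1 / 2) :=
    ((hasDerivAt_id _).mul hasDerivAt_Gamma_one_half).congr_of_eventuallyEq hGamma
  rw [show (3 / 2 : ℝ) = 1 / 2 + 1 by norm_num, ← deriv_comp_add_const, hderiv.deriv,
    Gamma_one_half_eq]
  ring

theorem integral_sq_mul_exp_neg_sq_mul_log :
    ∫ t in Set.Ioi (0 : ℝ), t ^ 2 * exp (-t ^ 2) * log t =
      √π / 8 * (2 - eulerMascheroniConstant - 2 * log 2) := by
  have hsubst (t : ℝ) (ht : t ∈ Set.Ioi (0 : ℝ)) : t ^ 2 * exp (-t ^ 2) * log t =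
      1 / 4 * ((2 * t ^ ((2 : ℝ) - 1)) •
        ((t ^ (2 : ℝ)) ^ ((3 / 2 : ℝ) - 1) * (log (t ^ (2 : ℝ)) * exp (-t ^ (2 : ℝ))))) := by
    rw [← rpow_mul (Set.mem_Ioi.mp ht).le, log_rpow ht]
    norm_num
    ring
  rw [setIntegral_congr_fun measurableSet_Ioi hsubst, integral_const_mul,
    integral_comp_rpow_Ioi_of_pos (g := fun u => u ^ ((3 / 2 : ℝ) - 1) * (log u * exp (-u)))
      two_pos, integral_rpow_mul_log_mul_exp_neg (by norm_num), deriv_Gamma_three_halves]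
  ring

theorem sq_mul_abs_log_le {x : ℝ} (hx : 0 < x) : x ^ 2 * |log x| ≤ (x + 1) ^ 3 := by
  have hlog : |log x| ≤ x + x⁻¹ := by
    have := inv_pos.mpr hx
    rw [abs_le]
    constructor <;> linarith [log_le_sub_one_of_pos hx, one_sub_inv_le_log_of_pos hx]
  calc x ^ 2 * |log x| ≤ x ^ 2 * (x + x⁻¹) := by gcongr
    _ = x ^ 3 + x := by field_simp
    _ ≤ (x + 1) ^ 3 := by nlinarith [sq_nonneg x]

theorem tendsto_sum_maxwellWeight_mul_log_div_sqrt :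
    Tendsto (fun m : ℕ => ∑ k ∈ Finset.Icc 1 m, maxwellWeight m k * log (k / √m)) atTop
      (𝓝 ((2 - eulerMascheroniConstant - 2 * log 2) / 2)) := by
  convert tendsto_sum_maxwellWeight_mul (continuousOn_log.mono fun x (hx : 0 < x) => hx.ne')
    fun x hx => (sq_mul_abs_log_le hx).trans_eq (one_mul _).symm using 2
  rw [integral_sq_mul_exp_neg_sq_mul_log]
  field_simp
  ring

theorem tendsto_sum_maxwellWeight_div :
    Tendsto (fun m : ℕ => ∑ k ∈ Finset.Icc 1 m, maxwellWeight m k / k) atTop (𝓝 0) := by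
  have hinv (x : ℝ) (hx : 0 < x) : x ^ 2 * |x⁻¹| ≤ 1 * (x + 1) ^ 1 := by
    rw [abs_of_pos (inv_pos.mpr hx), sq, mul_inv_cancel_right₀ hx.ne']
    linarith
  have hsqrt : Tendsto (fun m : ℕ => (√(m : ℝ))⁻¹) atTop (𝓝 0) :=
    tendsto_inv_atTop_zero.comp (tendsto_sqrt_atTop.comp tendsto_natCast_atTop_atTop)
  have h := hsqrt.mul (tendsto_sum_maxwellWeight_mul
    (continuousOn_inv₀.mono fun x (hx : 0 < x) => hx.ne') hinv)
  rw [zero_mul] at h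
  refine h.congr' ?_
  filter_upwards [eventually_gt_atTop 0] with m hm
  rw [Finset.mul_sum]
  refine Finset.sum_congr rfl fun k _ => ?_
  have : 0 < √(m : ℝ) := sqrt_pos.mpr (by exact_mod_cast hm)
  field_simp

theorem sum_maxwellWeight_mul_log {m : ℕ} (hm : 0 < m) :
    ∑ k ∈ Finset.Icc 1 m, maxwellWeight m k * log k =
      ∑ k ∈ Finset.Icc 1 m, maxwellWeight m k * log (k / √m) + 1 / 2 * log m := by
  have hm' : (0 : ℝ) < m := by exact_mod_cast hm
  have hmass : 1 / 2 * log m = ∑ k ∈ Finset.Icc 1 m, maxwellWeight m k * (1 / 2 * log m) := by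
    rw [← Finset.sum_mul, sum_maxwellWeight hm, one_mul]
  rw [hmass, ← Finset.sum_add_distrib]
  refine Finset.sum_congr rfl fun k hk => ?_
  have hk' : (0 : ℝ) < k := by exact_mod_cast (Finset.mem_Icc.mp hk).1
  rw [log_div hk'.ne' (sqrt_pos.mpr hm').ne', log_sqrt hm'.le]
  ring

theorem mul_log_le_mul_log_add {x y : ℝ} (hx : 0 < x) (hy : 0 ≤ y) :
    y * log y ≤ y * log x + y * (y - x) / x := by
  rcases hy.eq_or_lt with rfl | hy
  · simp
  · have h := mul_le_mul_of_nonneg_left (log_le_sub_one_of_pos (div_pos hy hx)) hy.le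
    rw [log_div hy.ne' hx.ne', div_sub_one hx.ne', ← mul_div_assoc] at h
    linarith

theorem two_mul_mul_log_le_sub_add_add {x h : ℝ} (hh : 0 ≤ h) (hhx : h ≤ x) :
    2 * (x * log x) ≤ (x - h) * log (x - h) + (x + h) * log (x + h) := by
  have hconv := convexOn_mul_log.2 (Set.mem_Ici.mpr (sub_nonneg.mpr hhx))
    (Set.mem_Ici.mpr (by linarith : 0 ≤ x + h)) one_half_pos.le one_half_pos.le (add_halves 1)
  simp only [smul_eq_mul] at hconv
  rw [show 1 / 2 * (x - h) + 1 / 2 * (x + h) = x by ring] at hconv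
  linarith

theorem sub_mul_log_add_add_mul_log_le {x h : ℝ} (hx : 0 < x) (hh : 0 ≤ h) (hhx : h ≤ x) :
    (x - h) * log (x - h) + (x + h) * log (x + h) ≤ 2 * (x * log x) + 2 * h := by
  have hsub := mul_log_le_mul_log_add hx (sub_nonneg.mpr hhx)
  have hadd := mul_log_le_mul_log_add hx (add_nonneg hx.le hh)
  have hsq : (x - h) * (x - h - x) / x + (x + h) * (x + h - x) / x ≤ 2 * h := by
    rw [← add_div, div_le_iff₀ hx]
    nlinarith
  linarith

/-- The mean of `log` over the two indices `i` for which `ballot m k` occurs in `gammaB m q i`,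
namely `k - q` and `k + q`, each weighted by itself. It takes the place of `log k` when `q > 0`.
For `k < q` there is no such index, and the truncated `k - q = 0` contributes nothing. -/
noncomputable def foldedLog (q k : ℕ) : ℝ :=
  (((k - q : ℕ) : ℝ) * log (k - q : ℕ) + if q ≤ k then ((k + q : ℕ) : ℝ) * log (k + q : ℕ) else 0) /
    (2 * k)

theorem abs_foldedLog_sub_log_le (q : ℕ) {k : ℕ} (hk : 0 < k) :
    |foldedLog q k - log k| ≤ (q + q * log q) / k := by
  have hk' : (0 : ℝ) < k := by exact_mod_cast hk
  have hqlog : 0 ≤ q * log q := mul_nonneg q.cast_nonneg (log_natCast_nonneg q)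
  rw [foldedLog, show (log k : ℝ) = 2 * (k * log k) / (2 * k) by field_simp, ← sub_div,
    abs_div, abs_of_pos (by positivity : (0 : ℝ) < 2 * k),
    ← mul_div_mul_left (q + q * log q) (k : ℝ) two_ne_zero]
  gcongr
  rw [abs_le]
  rcases lt_or_ge k q with hkq | hqk
  · have hkq' : (k : ℝ) ≤ q := by exact_mod_cast hkq.le
    have hklog : 0 ≤ k * log k := mul_nonneg hk'.le (log_natCast_nonneg k)
    have hmono : k * log k ≤ q * log q := by
      have := log_natCast_nonneg k
      gcongr
    rw [if_neg hkq.not_ge, Nat.sub_eq_zero_of_le hkq.le, Nat.cast_zero, zero_mul]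
    constructor <;> linarith
  · have hqk' : (q : ℝ) ≤ k := by exact_mod_cast hqk
    have hlower := two_mul_mul_log_le_sub_add_add q.cast_nonneg hqk'
    have hupper := sub_mul_log_add_add_mul_log_le hk' q.cast_nonneg hqk'
    rw [if_pos hqk]
    push_cast [Nat.cast_sub hqk]
    constructor <;> linarith

theorem sum_mul_gammaB_mul_log_div {m q : ℕ} (hm : 0 < m) (hq : q ≤ m) :
    (∑ i ∈ Finset.Icc 1 (m + q), (i : ℝ) * gammaB m q i * log i) / 2 ^ (2 * m - 1) =
      ∑ k ∈ Finset.Icc 1 m, maxwellWeight m k * foldedLog q k := by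
  have hsum := sum_mul_gammaB hm hq (f := fun i => i * log i) (by simp)
  simp_rw [mul_right_comm _ _ (log _), hsum, Finset.sum_div]
  refine Finset.sum_congr rfl fun k hk => ?_
  have hk' : (k : ℝ) ≠ 0 := by
    exact_mod_cast Nat.one_le_iff_ne_zero.mp (Finset.mem_Icc.mp hk).1
  rw [maxwellWeight, foldedLog, four_pow_eq_two_mul_two_pow hm]
  field_simp
  ring

theorem tendsto_sum_maxwellWeight_mul_foldedLog_sub_log (q : ℕ) :
    Tendsto (fun m : ℕ => ∑ k ∈ Finset.Icc 1 m, maxwellWeight m k * (foldedLog q k - log k)) atTop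
      (𝓝 0) := by
  have h := tendsto_sum_maxwellWeight_div.const_mul (q + q * log q)
  rw [mul_zero] at h
  refine squeeze_zero_norm (fun m => (norm_sum_le _ _).trans ?_) h
  rw [Finset.mul_sum]
  refine Finset.sum_le_sum fun k hk => ?_
  rw [norm_mul, norm_of_nonneg (maxwellWeight_nonneg m k), norm_eq_abs, mul_div_left_comm]
  gcongr
  · exact maxwellWeight_nonneg m k
  · exact abs_foldedLog_sub_log_le q (Finset.mem_Icc.mp hk).1

theorem tendsto_sum_mul_gammaB_mul_log (q : ℕ) :
    Tendsto (fun m : ℕ =>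
      (∑ i ∈ Finset.Icc 1 (m + q), (i : ℝ) * gammaB m q i * log i) / 2 ^ (2 * m - 1) -
        1 / 2 * log m) atTop (𝓝 ((2 - eulerMascheroniConstant - 2 * log 2) / 2)) := by
  have h := tendsto_sum_maxwellWeight_mul_log_div_sqrt.add
    (tendsto_sum_maxwellWeight_mul_foldedLog_sub_log q)
  rw [add_zero] at h
  refine h.congr' ?_
  filter_upwards [eventually_gt_atTop 0, eventually_ge_atTop q] with m hm hq
  simp only [sum_mul_gammaB_mul_log_div hm hq, mul_sub, Finset.sum_sub_distrib,
    sum_maxwellWeight_mul_log hm]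
  ring

theorem stmt12_general (q : ℕ) :
    Tendsto (fun m : ℕ =>
      (∑ i ∈ Finset.Icc 1 (m + q), (i : ℝ) * (gammaB m q i) * logb 2 i) / 2 ^ (2 * m - 1)
        - (1 / 2) * logb 2 (2 * m)) atTop
      (𝓝 ((2 - log 4 - eulerMascheroniConstant) / log 4 - 1 / 2)) := by
  have hlog2 : log 2 ≠ 0 := (log_pos one_lt_two).ne'
  have hlog4 : log 4 = 2 * log 2 := by
    rw [show (4 : ℝ) = 2 ^ 2 by norm_num, log_pow, Nat.cast_ofNat]
  have h := ((tendsto_sum_mul_gammaB_mul_log q).div_const (log 2)).sub_const (1 / 2)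
  rw [show (2 - log 4 - eulerMascheroniConstant) / log 4 =
    (2 - eulerMascheroniConstant - 2 * log 2) / 2 / log 2 by rw [hlog4, div_div]; ring]
  refine h.congr' ?_
  filter_upwards [eventually_gt_atTop 0] with m hm
  have hm' : (m : ℝ) ≠ 0 := by exact_mod_cast hm.ne'
  simp only [logb, mul_div_assoc']
  rw [← Finset.sum_div, log_mul two_ne_zero hm']
  field_simp
  ring

/-- the average prefix length of Scheme B exceeds `½log₂ n`
by at most `β = (2 − ln 4 − γ)/ln 4 − ½` asymptotically. -/
theorem stmt12 (q : ℕ) :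
    Filter.limsup (fun m : ℕ =>
      (∑ i ∈ Finset.Icc 1 (m + q), (i : ℝ) * (gammaB m q i) * Real.logb 2 i) / 2^(2*m-1)
        - (1/2) * Real.logb 2 (2*m)) Filter.atTop
      ≤ (2 - Real.log 4 - Real.eulerMascheroniConstant) / Real.log 4 - 1/2 :=
  (stmt12_general q).limsup_eq.le
end

section
/- For the case q = 0, the average redundancy of Scheme B is asymptotically (1/2) log₂ n + 1 + β: writing n = 2m, one has lim_{m→∞} [ 1 + 2^{−(2m−1)} · Σ_{i=1}^{m} i · (4i/(2m)) · C(2m, m+i) · log₂ i − (1/2) log₂(2m) ] = 1 + β, where β = (2 − ln 4 − γ)/(ln 4) − 1/2, γ is the Euler–Mascheroni constant, and C(a,b) denotes the binomial coefficient (numerically 1 + β ≈ 0.526). -/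
/-!
The number `i` of admissible balancing indices of a random word has a law proportional to
`i ^ 2 * (2m).choose (m + i)`, and `log₂ i` is averaged over that law. Since
`(2m).choose (m + i) / (2m).choose m` tends to `exp (-x ^ 2)` along `i ∼ x √m`, dominated
convergence shows that `i / √m` tends in law to the density `4 / √π * x ^ 2 * exp (-x ^ 2)`.
The total mass is a telescoping sum, so the normalising constants cancel without Stirling's formula.
The expectation of `log x` for the limit law is governed by the derivative of `Γ` at `3 / 2`, which
brings in Euler's constant.
-/

open Filter MeasureTheory Real Set Topology

section Combinatorics

lemma two_mul_sub_mul_choose_succ {R : Type*} [CommRing R] (n k : ℕ) :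
    (2 * (k + 1) - (n + 1)) * ((n + 1).choose (k + 1) : R)
      = (n + 1) * (n.choose k - n.choose (k + 1)) := by
  have pascal : ((n + 1).choose (k + 1) : R) = n.choose k + n.choose (k + 1) := by
    rw [Nat.choose_succ_succ', Nat.cast_add]
  have absorb : ((n + 1) * n.choose k : R) = (n + 1).choose (k + 1) * (k + 1) := by
    exact_mod_cast congrArg (Nat.cast (R := R)) (Nat.add_one_mul_choose_eq n k)
  linear_combination -2 * absorb - (n + 1) * pascal

lemma sum_range_succ_mul_sub {R : Type*} [CommRing R] (a : ℕ → R) (n : ℕ) :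
    ∑ i ∈ Finset.range n, (i + 1 : R) * (a i - a (i + 1))
      = ∑ i ∈ Finset.range n, a i - n * a n := by
  induction n with
  | zero => simp
  | succ n ih =>
    rw [Finset.sum_range_succ, Finset.sum_range_succ, ih]
    push_cast
    ring

lemma sum_range_choose_upper_half (m : ℕ) :
    ∑ i ∈ Finset.range (m + 1), (2 * m + 1).choose (m + 1 + i) = 4 ^ m := by
  rw [← Nat.sum_range_choose_halfway, ← Finset.sum_range_reflect]
  refine Finset.sum_congr rfl fun i hi => ?_
  have := Finset.mem_range.1 hi
  exact Nat.choose_symm_of_eq_add (by omega)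

lemma four_mul_sum_sq_mul_choose (m : ℕ) :
    4 * ∑ i ∈ Finset.Icc 1 m, i ^ 2 * (2 * m).choose (m + i) = m * 4 ^ m := by
  obtain _ | m := m
  · simp
  have term (i : ℕ) : ((1 + i) ^ 2 * (2 * (m + 1)).choose (m + 1 + (1 + i)) : ℤ)
      = (m + 1) * ((i + 1) * ((2 * m + 1).choose (m + 1 + i)
          - (2 * m + 1).choose (m + 1 + (i + 1)))) := by
    have h := two_mul_sub_mul_choose_succ (R := ℤ) (2 * m + 1) (m + 1 + i)
    simp only [show 2 * (m + 1) = 2 * m + 1 + 1 by ring, add_comm 1 i, ← add_assoc] at h ⊢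
    push_cast at h
    refine mul_left_cancel₀ (two_ne_zero (α := ℤ)) ?_
    linear_combination (i + 1 : ℤ) * h
  have last : (2 * m + 1).choose (m + 1 + (m + 1)) = 0 := Nat.choose_eq_zero_of_lt (by omega)
  rw [← Finset.Ico_add_one_right_eq_Icc, Finset.sum_Ico_eq_sum_range]
  zify
  simp only [Nat.add_sub_cancel, term]
  rw [← Finset.mul_sum, sum_range_succ_mul_sub (fun i => ((2 * m + 1).choose (m + 1 + i) : ℤ)),
    last, ← Nat.cast_sum, sum_range_choose_upper_half]
  push_cast
  ring

end Combinatorics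

section CentralRatio

/-- The binomial coefficient at distance `i` to the right of the centre of row `2 * m`, relative to
the central one; it is the discrete counterpart of the Gaussian `exp (-x ^ 2)`, with
`x = i / √m`. -/
noncomputable def centralRatio (m i : ℕ) : ℝ := (2 * m).choose (m + i) / m.centralBinom

variable {m i : ℕ}

lemma centralRatio_nonneg (m i : ℕ) : 0 ≤ centralRatio m i := by
  unfold centralRatio
  positivity

lemma centralRatio_eq_zero (h : m < i) : centralRatio m i = 0 := by
  rw [centralRatio, Nat.choose_eq_zero_of_lt (by omega), Nat.cast_zero, zero_div]

lemma centralRatio_eq_prod (h : i ≤ m) :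
    centralRatio m i = ∏ j ∈ Finset.range i, ((m - j) / (m + j + 1) : ℝ) := by
  induction i with
  | zero =>
    have : (m.centralBinom : ℝ) ≠ 0 := mod_cast m.centralBinom_ne_zero
    simp [centralRatio, ← Nat.centralBinom_eq_two_mul_choose, this]
  | succ i ih =>
    have step := Nat.choose_succ_right_eq (2 * m) (m + i)
    rw [show 2 * m - (m + i) = m - i by omega] at step
    replace step : ((2 * m).choose (m + (i + 1)) * (m + i + 1) : ℝ)
        = (2 * m).choose (m + i) * (m - i) := by
      rw [← Nat.cast_sub (by omega)]
      exact_mod_cast step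
    rw [Finset.prod_range_succ, ← ih (by omega), centralRatio, centralRatio,
      eq_div_of_mul_eq (by positivity) step]
    ring

lemma prod_exp_neg_odd_div (n : ℕ) (c : ℝ) :
    ∏ j ∈ Finset.range n, exp (-((2 * j + 1) / c)) = exp (-(n ^ 2 / c)) := by
  induction n with
  | zero => simp
  | succ n ih =>
    rw [Finset.prod_range_succ, ih, ← exp_add]
    push_cast
    ring_nf

lemma one_sub_div_one_add_le_exp {t : ℝ} (ht₀ : 0 ≤ t) (ht₁ : t < 1) :
    (1 - t) / (1 + t) ≤ exp (-(2 * t)) := by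
  have hpos : 0 < (1 + t) / (1 - t) := div_pos (by linarith) (by linarith)
  have hlog : 2 * t ≤ log ((1 + t) / (1 - t)) := by
    have := sum_range_le_log_div ht₀ ht₁ 1
    norm_num at this
    linarith
  rw [← inv_div, exp_neg]
  exact inv_anti₀ (exp_pos _) ((le_log_iff_exp_le hpos).1 hlog)

lemma centralRatio_le_exp (m i : ℕ) : centralRatio m i ≤ exp (-(i ^ 2 / (m + 1 / 2))) := by
  rcases lt_or_ge m i with h | h
  · rw [centralRatio_eq_zero h]
    positivity
  rw [centralRatio_eq_prod h, ← prod_exp_neg_odd_div]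
  refine Finset.prod_le_prod (fun j hj => ?_) fun j hj => ?_ <;>
    have hj : (j : ℝ) + 1 ≤ m := mod_cast (Finset.mem_range.1 hj).trans_le h
  · exact div_nonneg (by linarith) (by positivity)
  set t : ℝ := (2 * j + 1) / (2 * m + 1)
  calc ((m - j) / (m + j + 1) : ℝ) = (1 - t) / (1 + t) := by
        simp only [t]
        field_simp
        ring
    _ ≤ exp (-(2 * t)) :=
        one_sub_div_one_add_le_exp (by positivity) (by
          rw [div_lt_one (by positivity)]
          linarith)
    _ = exp (-((2 * j + 1) / (m + 1 / 2))) := by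
        simp only [t]
        field_simp

lemma exp_le_centralRatio (h : i < m) : exp (-(i ^ 2 / (m - i))) ≤ centralRatio m i := by
  rw [centralRatio_eq_prod h.le, ← prod_exp_neg_odd_div]
  refine Finset.prod_le_prod (fun _ _ => (exp_pos _).le) fun j hj => ?_
  have hj : (j : ℝ) ≤ i := mod_cast (Finset.mem_range.1 hj).le
  have hi : (i : ℝ) < m := mod_cast h
  have hjm : (0 : ℝ) < m - j := by linarith
  have hpos : (0 : ℝ) < (m - j) / (m + j + 1) := by positivity
  calc exp (-((2 * j + 1) / (m - i))) ≤ exp (-((2 * j + 1) / (m - j))) := by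
        gcongr
    _ = exp (1 - ((m - j) / (m + j + 1) : ℝ)⁻¹) := by
        congr 1
        field_simp
        ring
    _ ≤ (m - j) / (m + j + 1) := (le_log_iff_exp_le hpos).1 (one_sub_inv_le_log_of_pos hpos)

lemma tendsto_centralRatio {k : ℕ → ℕ} {x : ℝ}
    (hk : Tendsto (fun m : ℕ => (k m : ℝ) / √m) atTop (𝓝 x)) :
    Tendsto (fun m : ℕ => centralRatio m (k m)) atTop (𝓝 (exp (-x ^ 2))) := by
  have hsqrt : Tendsto (fun m : ℕ => √(m : ℝ)) atTop atTop :=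
    tendsto_sqrt_atTop.comp tendsto_natCast_atTop_atTop
  have hk_div : Tendsto (fun m : ℕ => (k m : ℝ) / m) atTop (𝓝 0) := by
    refine (hk.div_atTop hsqrt).congr fun m => ?_
    rw [div_div, mul_self_sqrt m.cast_nonneg]
  have hk_lt : ∀ᶠ m : ℕ in atTop, k m < m := by
    filter_upwards [hk_div.eventually_lt_const one_pos, eventually_gt_atTop 0] with m hlt hm
    rw [div_lt_one (by positivity)] at hlt
    exact_mod_cast hlt
  have gaussian {d : ℕ → ℝ} (hd : Tendsto (fun m : ℕ => m / d m) atTop (𝓝 1)) :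
      Tendsto (fun m : ℕ => exp (-(k m ^ 2 / d m))) atTop (𝓝 (exp (-x ^ 2))) := by
    refine (continuous_exp.tendsto _).comp (Tendsto.neg ?_)
    have h := (hk.pow 2).mul hd
    rw [mul_one] at h
    refine h.congr' ?_
    filter_upwards [eventually_gt_atTop 0] with m hm
    rw [div_pow, sq_sqrt m.cast_nonneg, div_mul_div_cancel₀ (by positivity)]
  refine tendsto_of_tendsto_of_tendsto_of_le_of_le'
    (gaussian (d := fun m => m - k m) ?_) (gaussian (tendsto_natCast_div_add_atTop (1 / 2))) ?_ ?_
  · have h := (hk_div.const_sub 1).inv₀ (by norm_num)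
    rw [sub_zero, inv_one] at h
    refine h.congr' ?_
    filter_upwards [eventually_gt_atTop 0] with m hm
    rw [one_sub_div (by positivity), inv_div]
  · filter_upwards [hk_lt] with m hm using exp_le_centralRatio hm
  · exact .of_forall fun m => centralRatio_le_exp m (k m)

end CentralRatio

section GaussianSums

lemma integral_comp_natCeil {E : Type*} [NormedAddCommGroup E] [NormedSpace ℝ E] [CompleteSpace E]
    {G : ℕ → E} {m : ℕ} (hG : ∀ k, m < k → G k = 0) :
    ∫ x in Ioi (0 : ℝ), G ⌈x⌉₊ = ∑ i ∈ Finset.Icc 1 m, G i := by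
  have hceil (k : ℕ) : EqOn (fun x : ℝ => G ⌈x⌉₊) (fun _ => G (k + 1)) (Ioc k (k + 1 : ℕ)) := by
    intro x hx
    simp only [(Nat.ceil_eq_iff k.succ_ne_zero).2 ⟨by simpa using hx.1, hx.2⟩]
  have hle (k : ℕ) : (k : ℝ) ≤ (k + 1 : ℕ) := mod_cast k.le_succ
  have htrunc : ∫ x in Ioi (0 : ℝ), G ⌈x⌉₊ = ∫ x in (0 : ℕ)..(m : ℝ), G ⌈x⌉₊ := by
    rw [intervalIntegral.integral_of_le (mod_cast m.zero_le), Nat.cast_zero]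
    refine setIntegral_eq_of_subset_of_forall_sdiff_eq_zero measurableSet_Ioi
      Ioc_subset_Ioi_self fun x hx => hG _ ?_
    rw [Nat.lt_ceil]
    by_contra! h
    exact hx.2 ⟨hx.1, h⟩
  have hintegrable (k : ℕ) : IntervalIntegrable (fun x : ℝ => G ⌈x⌉₊) volume k (k + 1 : ℕ) := by
    rw [intervalIntegrable_iff_integrableOn_Ioc_of_le (hle k)]
    exact (integrableOn_congr_fun (hceil k) measurableSet_Ioc).2 (by simp)
  rw [htrunc, ← intervalIntegral.sum_integral_adjacent_intervals fun k _ => hintegrable k,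
    ← Finset.Ico_add_one_right_eq_Icc, Finset.sum_Ico_eq_sum_range]
  refine Finset.sum_congr rfl fun k _ => ?_
  rw [intervalIntegral.integral_of_le (hle k), setIntegral_congr_fun measurableSet_Ioc (hceil k)]
  rw [setIntegral_const, add_comm k 1]
  simp

lemma abs_mul_centralRatio_le {φ : ℝ → ℝ} {C a b x : ℝ} {m i : ℕ}
    (hφ : ∀ u, 0 < u → |φ u| ≤ C * exp (a * u ^ 2)) (hab : a ≤ b) (hb : b ≤ m / (m + 1 / 2))
    (hx : 0 < x) (hxi : x ≤ i / √m) :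
    |φ (i / √m) * centralRatio m i| ≤ C * exp (-(b - a) * x ^ 2) := by
  set u : ℝ := i / √m
  have hm : (m : ℝ) ≠ 0 := by
    intro hm
    simp only [u, hm, sqrt_zero, div_zero] at hxi
    linarith
  have hC : 0 ≤ C := nonneg_of_mul_nonneg_left ((abs_nonneg _).trans (hφ x hx)) (exp_pos _)
  have hi : (i : ℝ) ^ 2 / (m + 1 / 2) = m / (m + 1 / 2) * u ^ 2 := by
    rw [div_pow, sq_sqrt m.cast_nonneg]
    field_simp
  calc |φ u * centralRatio m i| = |φ u| * centralRatio m i := by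
        rw [abs_mul, abs_of_nonneg (centralRatio_nonneg m i)]
    _ ≤ C * exp (a * u ^ 2) * exp (-(m / (m + 1 / 2) * u ^ 2)) := by
        rw [← hi]
        gcongr
        exacts [centralRatio_nonneg m i, hφ u (hx.trans_le hxi), centralRatio_le_exp m i]
    _ ≤ C * exp (a * u ^ 2) * exp (-(b * u ^ 2)) := by gcongr
    _ = C * exp (-((b - a) * u ^ 2)) := by
        rw [mul_assoc, ← exp_add]
        ring_nf
    _ ≤ C * exp (-(b - a) * x ^ 2) := by
        rw [neg_mul]
        have := sub_nonneg.2 hab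
        gcongr

theorem tendsto_sum_mul_centralRatio {φ : ℝ → ℝ} {C a : ℝ} (ha : a < 1)
    (hφ : ContinuousOn φ (Ioi 0)) (hbound : ∀ u, 0 < u → |φ u| ≤ C * exp (a * u ^ 2)) :
    Tendsto (fun m : ℕ => (√m)⁻¹ * ∑ i ∈ Finset.Icc 1 m, φ (i / √m) * centralRatio m i) atTop
      (𝓝 (∫ x in Ioi (0 : ℝ), φ x * exp (-x ^ 2))) := by
  obtain ⟨b, hab, hb⟩ := exists_between ha
  have hsum : ∀ᶠ m : ℕ in atTop,
      ∫ x in Ioi (0 : ℝ), φ (⌈x * √m⌉₊ / √m) * centralRatio m ⌈x * √m⌉₊ =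
        (√m)⁻¹ * ∑ i ∈ Finset.Icc 1 m, φ (i / √m) * centralRatio m i := by
    filter_upwards [eventually_gt_atTop 0] with m hm
    rw [integral_comp_mul_right_Ioi (fun y => φ (⌈y⌉₊ / √m) * centralRatio m ⌈y⌉₊) 0
        (by positivity), zero_mul, smul_eq_mul,
      integral_comp_natCeil (G := fun i => φ (i / √m) * centralRatio m i)
        fun k hk => by rw [centralRatio_eq_zero hk, mul_zero]]
  refine Tendsto.congr' hsum (tendsto_integral_filter_of_dominated_convergence
    (fun x => C * exp (-(b - a) * x ^ 2)) (.of_forall fun m => ?_) ?_ ?_ ?_)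
  · exact ((measurable_from_nat (f := fun i : ℕ => φ (i / √m) * centralRatio m i)).comp
      (measurable_id.mul_const _).nat_ceil).aestronglyMeasurable
  · filter_upwards [(tendsto_natCast_div_add_atTop (1 / 2)).eventually_const_le hb,
      eventually_gt_atTop 0] with m hbm hm
    filter_upwards [ae_restrict_mem measurableSet_Ioi] with x hx
    refine abs_mul_centralRatio_le hbound hab.le hbm hx ?_
    rw [le_div_iff₀ (by positivity)]
    exact Nat.le_ceil _
  · exact ((integrable_exp_neg_mul_sq (sub_pos.2 hab)).const_mul C).integrableOn
  · filter_upwards [ae_restrict_mem measurableSet_Ioi] with x hx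
    have hceil : Tendsto (fun m : ℕ => (⌈x * √m⌉₊ : ℝ) / √m) atTop (𝓝 x) :=
      (tendsto_nat_ceil_mul_div_atTop (le_of_lt hx)).comp
        (tendsto_sqrt_atTop.comp tendsto_natCast_atTop_atTop)
    exact ((hφ.continuousAt (Ioi_mem_nhds hx)).tendsto.comp hceil).mul (tendsto_centralRatio hceil)

end GaussianSums

section GammaIntegrals

lemma hasDerivAt_Gamma_integral {s : ℝ} (hs : 0 < s) :
    HasDerivAt Gamma (∫ t in Ioi (0 : ℝ), t ^ (s - 1) * (log t * exp (-t))) s := by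
  have hGamma : Complex.GammaIntegral =ᶠ[𝓝 (s : ℂ)] Complex.Gamma := by
    filter_upwards [(isOpen_lt continuous_const Complex.continuous_re).mem_nhds
      (show (0 : ℝ) < (s : ℂ).re from hs)] with z hz using (Complex.Gamma_eq_integral hz).symm
  have hderiv := ((Complex.hasDerivAt_GammaIntegral (s := s) hs).congr_of_eventuallyEq
    hGamma.symm).real_of_complex
  refine hderiv.congr_deriv ?_
  rw [← Complex.ofReal_re (∫ t in Ioi (0 : ℝ), t ^ (s - 1) * (log t * exp (-t))),
    ← integral_complex_ofReal]
  refine congrArg Complex.re (setIntegral_congr_fun measurableSet_Ioi fun t ht => ?_)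
  push_cast [Complex.ofReal_cpow (le_of_lt ht)]
  rfl

lemma integral_rpow_mul_log_mul_exp_neg_sq {s : ℝ} (hs : -1 < s) :
    ∫ x in Ioi (0 : ℝ), x ^ s * log x * exp (-x ^ 2) = deriv Gamma ((s + 1) / 2) / 4 := by
  have hsubst := integral_comp_rpow_Ioi_of_pos
    (g := fun t : ℝ => t ^ ((s + 1) / 2 - 1) * (log t * exp (-t))) two_pos
  rw [(hasDerivAt_Gamma_integral (by linarith)).deriv, ← hsubst, ← integral_div]
  refine setIntegral_congr_fun measurableSet_Ioi fun x (hx : 0 < x) => ?_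
  have hpow : x ^ s = x ^ (2 - 1 : ℝ) * (x ^ (2 : ℝ)) ^ ((s + 1) / 2 - 1) := by
    rw [← rpow_mul hx.le, ← rpow_add hx]
    ring_nf
  simp only [smul_eq_mul]
  rw [hpow, log_rpow hx, rpow_two]
  ring

lemma integral_sq_mul_exp_neg_sq : ∫ x in Ioi (0 : ℝ), x ^ 2 * exp (-x ^ 2) = √π / 4 := by
  have h := integral_rpow_mul_exp_neg_rpow (p := 2) (q := 2) (by norm_num) (by norm_num)
  simp only [rpow_two] at h
  rw [h, show ((2 : ℝ) + 1) / 2 = 1 / 2 + 1 by norm_num, Gamma_add_one (by norm_num),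
    Gamma_one_half_eq]
  ring

lemma hasDerivAt_Gamma_add_one {s d : ℝ} (hs : s ≠ 0) (h : HasDerivAt Gamma d s) :
    HasDerivAt Gamma (Gamma s + s * d) (s + 1) := by
  have hmul : HasDerivAt (fun t => (t - 1) * Gamma (t - 1)) (Gamma s + s * d) (s + 1) := by
    have hs' : s + 1 - 1 = s := by ring
    have hsub := ((hasDerivAt_id (s + 1)).sub_const 1).mul
      (HasDerivAt.comp_sub_const (s + 1) 1 (by rwa [hs']))
    exact hsub.congr_deriv (by rw [hs', id, hs', one_mul])
  refine hmul.congr_of_eventuallyEq ?_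
  filter_upwards [isOpen_ne.mem_nhds (show s + 1 ≠ 1 by simpa using hs)] with t ht
  rw [← Gamma_add_one (sub_ne_zero.2 ht), sub_add_cancel]

lemma deriv_Gamma_three_half :
    deriv Gamma (3 / 2) = √π * (1 - eulerMascheroniConstant / 2 - log 2) := by
  have h := hasDerivAt_Gamma_add_one (by norm_num) hasDerivAt_Gamma_one_half
  rw [show (1 / 2 + 1 : ℝ) = 3 / 2 by norm_num, Gamma_one_half_eq] at h
  rw [h.deriv]
  ring

lemma integral_sq_mul_log_mul_exp_neg_sq :
    ∫ x in Ioi (0 : ℝ), x ^ 2 * log x * exp (-x ^ 2) =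
      √π / 4 * (1 - eulerMascheroniConstant / 2 - log 2) := by
  have h := integral_rpow_mul_log_mul_exp_neg_sq (s := 2) (by norm_num)
  rw [show ((2 : ℝ) + 1) / 2 = 3 / 2 by norm_num, deriv_Gamma_three_half] at h
  simp only [rpow_two] at h
  rw [h]
  ring

end GammaIntegrals

section BalancingProb

/-- The probability `i * γ₀(i, n - 1) / 2 ^ (n - 1)`, with `n = 2 * m`, that Scheme B encodes a
uniformly random information word into a word with exactly `i` received balancing indices: each of
the `γ₀(i, n - 1)` such words serves `i` information words. -/
noncomputable def balancingProb (m i : ℕ) : ℝ :=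
  i * (4 * i / (2 * m)) * (2 * m).choose (m + i) / 2 ^ (2 * m - 1)

variable {m : ℕ}

lemma balancingProb_eq (hm : m ≠ 0) (i : ℕ) :
    balancingProb m i = 4 * (i ^ 2 * (2 * m).choose (m + i)) / (m * 4 ^ m) := by
  have hpow : (4 : ℝ) ^ m = 2 * 2 ^ (2 * m - 1) := by
    rw [← pow_succ', Nat.sub_add_cancel (by omega), pow_mul]
    norm_num
  rw [balancingProb, hpow]
  field_simp

lemma sum_balancingProb (hm : m ≠ 0) : ∑ i ∈ Finset.Icc 1 m, balancingProb m i = 1 := by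
  simp only [balancingProb_eq hm]
  rw [← Finset.sum_div, ← Finset.mul_sum, div_eq_one_iff_eq (by positivity)]
  exact_mod_cast four_mul_sum_sq_mul_choose m

lemma sq_mul_centralRatio (hm : m ≠ 0) (i : ℕ) :
    (i / √m) ^ 2 * centralRatio m i = 4 ^ m / (4 * m.centralBinom) * balancingProb m i := by
  have hcentral : (m.centralBinom : ℝ) ≠ 0 := mod_cast m.centralBinom_ne_zero
  rw [balancingProb_eq hm, centralRatio, div_pow, sq_sqrt m.cast_nonneg]
  field_simp

lemma sum_balancingProb_mul_logb_div_sqrt (b : ℝ) (hm : m ≠ 0) :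
    ∑ i ∈ Finset.Icc 1 m, balancingProb m i * logb b (i / √m) =
      ∑ i ∈ Finset.Icc 1 m, balancingProb m i * logb b i - 1 / 2 * logb b m := by
  have hlog : ∀ i ∈ Finset.Icc 1 m, logb b (i / √m) = logb b i - 1 / 2 * logb b m := by
    intro i hi
    have hi : i ≠ 0 := by linarith [(Finset.mem_Icc.1 hi).1]
    rw [logb_div (by positivity) (by positivity), sqrt_eq_rpow, logb_rpow_eq_mul_logb_of_pos
      (by positivity)]
  rw [Finset.sum_congr rfl fun i hi => by rw [hlog i hi, mul_sub], Finset.sum_sub_distrib,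
    ← Finset.sum_mul, sum_balancingProb hm, one_mul]

theorem tendsto_sum_balancingProb_mul {f : ℝ → ℝ} {C a : ℝ} (ha : a < 1)
    (hf : ContinuousOn f (Ioi 0)) (hbound : ∀ u, 0 < u → |u ^ 2 * f u| ≤ C * exp (a * u ^ 2)) :
    Tendsto (fun m : ℕ => ∑ i ∈ Finset.Icc 1 m, balancingProb m i * f (i / √m)) atTop
      (𝓝 (4 / √π * ∫ x in Ioi (0 : ℝ), x ^ 2 * f x * exp (-x ^ 2))) := by
  have hnum := tendsto_sum_mul_centralRatio (φ := fun u => u ^ 2 * f u) ha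
    ((continuousOn_pow 2).mul hf) hbound
  have hmass := tendsto_sum_mul_centralRatio (φ := fun u => u ^ 2) (C := 2) (a := 1 / 2)
    (by norm_num) (continuousOn_pow 2) fun u _ => by
      rw [abs_of_nonneg (sq_nonneg u)]
      linarith [add_one_le_exp (1 / 2 * u ^ 2)]
  rw [integral_sq_mul_exp_neg_sq] at hmass
  have hquot := hnum.div hmass (by positivity)
  rw [div_eq_inv_mul _ (√π / 4), inv_div] at hquot
  refine hquot.congr' ?_
  filter_upwards [eventually_ne_atTop 0] with m hm
  have hcentral : (m.centralBinom : ℝ) ≠ 0 := mod_cast m.centralBinom_ne_zero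
  have hterm (i : ℕ) : (i / √m) ^ 2 * f (i / √m) * centralRatio m i =
      4 ^ m / (4 * m.centralBinom) * (balancingProb m i * f (i / √m)) := by
    rw [mul_right_comm, sq_mul_centralRatio hm, mul_assoc]
  simp only [Pi.div_apply, hterm, sq_mul_centralRatio hm]
  rw [← Finset.mul_sum, ← Finset.mul_sum, sum_balancingProb hm]
  field_simp

lemma abs_sq_mul_log_le {u : ℝ} (hu : 0 < u) : |u ^ 2 * log u| ≤ 16 * exp (1 / 2 * u ^ 2) := by
  have hlog : |log u| ≤ u + u⁻¹ := by
    have hinv := inv_pos.2 hu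
    refine abs_le.2 ⟨?_, ?_⟩ <;>
      linarith [log_le_sub_one_of_pos hu, one_sub_inv_le_log_of_pos hu]
  calc |u ^ 2 * log u| = u ^ 2 * |log u| := by rw [abs_mul, abs_of_pos (by positivity)]
    _ ≤ u ^ 2 * (u + u⁻¹) := by gcongr
    _ = u ^ 3 + u := by field_simp
    _ ≤ 16 * (1 / 4 * u ^ 2 + 1) ^ 2 := by nlinarith [sq_nonneg (u - 1), sq_nonneg (u ^ 2 - u)]
    _ ≤ 16 * exp (1 / 4 * u ^ 2) ^ 2 := by
        gcongr
        exact add_one_le_exp _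
    _ = 16 * exp (1 / 2 * u ^ 2) := by
        rw [← exp_nat_mul]
        ring_nf

theorem tendsto_sum_balancingProb_mul_logb (b : ℝ) :
    Tendsto (fun m : ℕ =>
      ∑ i ∈ Finset.Icc 1 m, balancingProb m i * logb b i - 1 / 2 * logb b m) atTop
      (𝓝 ((1 - eulerMascheroniConstant / 2 - log 2) / log b)) := by
  have h := tendsto_sum_balancingProb_mul (by norm_num)
    (continuousOn_log.mono fun x hx => ne_of_gt hx) fun u => abs_sq_mul_log_le
  rw [integral_sq_mul_log_mul_exp_neg_sq, ← mul_assoc, div_mul_div_cancel₀' (by norm_num),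
    div_self (sqrt_ne_zero'.2 pi_pos), one_mul] at h
  refine (h.div_const (log b)).congr' ?_
  filter_upwards [eventually_ne_atTop 0] with m hm
  rw [← sum_balancingProb_mul_logb_div_sqrt b hm, Finset.sum_div]
  simp only [logb, mul_div_assoc]

end BalancingProb

/-- for `q = 0`, the average redundancy of Scheme B is
asymptotically `(1/2)log₂ n + 1 + β` where
`β = (2 − ln 4 − γ)/ln 4 − 1/2` (numerically `1 + β ≈ 0.526`). -/
theorem stmt13 :
    Filter.Tendsto (fun m : ℕ =>
      1 + (∑ i ∈ Finset.Icc 1 m,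
            (i : ℝ) * (4*(i : ℝ) / (2*m)) * (Nat.choose (2*m) (m+i)) * Real.logb 2 i)
          / 2^(2*m-1)
        - (1/2) * Real.logb 2 (2*m)) Filter.atTop
      (nhds (1 + ((2 - Real.log 4 - Real.eulerMascheroniConstant) / Real.log 4 - 1/2))) := by
  have hlog2 : log 2 ≠ 0 := (log_pos one_lt_two).ne'
  have hlog4 : log 4 = 2 * log 2 := by
    rw [show (4 : ℝ) = 2 ^ 2 by norm_num, log_pow, Nat.cast_ofNat]
  have hmean := (tendsto_sum_balancingProb_mul_logb 2).sub_const (1 / 2)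
  convert (hmean.const_add 1).congr' ?_ using 2
  · rw [hlog4]
    field_simp
    ring
  filter_upwards [eventually_ne_atTop 0] with m hm
  have hsum : (∑ i ∈ Finset.Icc 1 m,
      (i : ℝ) * (4 * i / (2 * m)) * (2 * m).choose (m + i) * logb 2 i) / 2 ^ (2 * m - 1) =
      ∑ i ∈ Finset.Icc 1 m, balancingProb m i * logb 2 i := by
    simp only [Finset.sum_div, balancingProb, div_mul_eq_mul_div]
  rw [hsum, logb_mul two_ne_zero (by positivity), logb_self_eq_one one_lt_two]
  ring
end
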